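/- Fix positive naturals N, T and index the coordinates of ℝ^{NT} by pairs (i,t) with i ∈ {1,…,N}, t ∈ {1,…,T} (coordinate (t−1)N+i in column-stacked order). Let 𝕂 be a real symmetric positive definite NT×NT matrix, m ∈ ℝ^{NT}, and let 𝚺 be the diagonal NT×NT matrix whose ((t−1)N+i)-entry is σ_t² with σ_t > 0. For each (i,t), let β_t > 0 and let γ_{i,t} : ℝ^{T} → ℝ and c_{i,t} : ℝ^{T} → ℝ be functions of the observation vector at input i that do not depend on its t-th coordinate, with |γ_{i,t}| ≤ Γ for some Γ < ∞ and 0 < c_min ≤ |c_{i,t}| ≤ c_max < ∞. Given an observation matrix Y ∈ ℝ^{N×T} with vectorisation y(Y) ∈ ℝ^{NT}, define the weights w_{i,t}(Y) = β_t·(1 + ((Y_{i,t} − γ_{i,t}(Y_i))/c_{i,t}(Y_i))²)^{−1/2}, the diagonal matrix J(Y) with ((t−1)N+i)-entry σ_t²/(2·w_{i,t}(Y)²), and the shifted mean m_W(Y) ∈ ℝ^{NT} with ((t−1)N+i)-entry m_{(t−1)N+i} + σ_t²·(−2(Y_{i,t} − γ_{i,t}(Y_i))/(c_{i,t}(Y_i)²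 + (Y_{i,t} − γ_{i,t}(Y_i))²)). The MO-RCGP posterior given Y is the multivariate Gaussian on ℝ^{NT} with mean μ(Y) = m + 𝕂(𝕂 + 𝚺J(Y))⁻¹(y(Y) − m_W(Y)) and covariance S(Y) = 𝕂(𝕂 + 𝚺J(Y))⁻¹𝚺J(Y), which is symmetric positive definite, and the channel-t marginal posterior is the multivariate Gaussian on ℝᴺ whose mean is the channel-t subvector of μ(Y) and whose covariance is the channel-t diagonal N×N sub-block of S(Y) (also symmetric positive definite). For m₀ ∈ {1,…,N}, s ∈ {1,…,T} and yᶜ ∈ ℝ, let Yᶜ denote Y with its (m₀,s) entry replaced by yᶜ. Then there exists a constant C ∈ ℝ, independent of yᶜ, such that for every t ∈ {1,…,T} and every yᶜ ∈ ℝ, klDiv( channel-t marginal posterior given Y, channel-t marginal posterior given Yᶜ ) ≤ ENNReal.ofReal C. (This is the robustness of MO-RCGP: the posterior influence function of an arbitrarily large contamination in any one channel is uniformly bounded across all channels.) -/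

import Mathlib

open Matrix MeasureTheory

open Classical in
/-- The Kullback–Leibler divergence `∫ log(dμ/dν) dμ` when `μ ≪ ν` with integrable
log-density, and `∞` otherwise. -/
noncomputable def klDiv {α : Type*} [MeasurableSpace α] (μ ν : Measure α) : ENNReal :=
  if μ ≪ ν ∧ Integrable (MeasureTheory.llr μ ν) μ then
    ENNReal.ofReal (∫ x, MeasureTheory.llr μ ν x ∂μ)
  else ⊤

/-- The multivariate Gaussian measure `N(μ, Σ)` on `ℝᴺ`, given by its density with
respect to Lebesgue measure. -/
noncomputable def multivariateGaussian {N : ℕ} (μv : Fin N → ℝ)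
    (S : Matrix (Fin N) (Fin N) ℝ) : Measure (Fin N → ℝ) :=
  volume.withDensity fun x =>
    ENNReal.ofReal ((Real.sqrt ((2 * Real.pi) ^ N * S.det))⁻¹ *
      Real.exp (-(1 / 2 : ℝ) * ((x - μv) ⬝ᵥ (S⁻¹ *ᵥ (x - μv)))))

section MORCGP

variable {N T : ℕ}

/-- The inverse multi-quadratic weight `w_{i,t}(Y)` of the MO-RCGP. -/
noncomputable def imqWeight (β : Fin T → ℝ) (γ c : Fin N → Fin T → (Fin T → ℝ) → ℝ)
    (Y : Fin N → Fin T → ℝ) (i : Fin N) (t : Fin T) : ℝ :=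
  β t * (Real.sqrt (1 + ((Y i t - γ i t (Y i)) / c i t (Y i)) ^ 2))⁻¹

/-- The diagonal noise matrix `𝚺` with entries `σ_t²`, coordinates indexed by
pairs `(i, t)`. -/
noncomputable def noiseMat (σ : Fin T → ℝ) :
    Matrix (Fin N × Fin T) (Fin N × Fin T) ℝ :=
  Matrix.diagonal fun p => (σ p.2) ^ 2

/-- The diagonal matrix `J(Y)` with entries `σ_t² / (2 w_{i,t}(Y)²)`. -/
noncomputable def Jmat (σ β : Fin T → ℝ) (γ c : Fin N → Fin T → (Fin T → ℝ) → ℝ)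
    (Y : Fin N → Fin T → ℝ) : Matrix (Fin N × Fin T) (Fin N × Fin T) ℝ :=
  Matrix.diagonal fun p => (σ p.2) ^ 2 / (2 * (imqWeight β γ c Y p.1 p.2) ^ 2)

/-- The shifted mean `m_W(Y)` of the MO-RCGP. -/
noncomputable def shiftedMean (m : Fin N × Fin T → ℝ) (σ : Fin T → ℝ)
    (γ c : Fin N → Fin T → (Fin T → ℝ) → ℝ) (Y : Fin N → Fin T → ℝ) :
    Fin N × Fin T → ℝ := fun p =>
  m p + (σ p.2) ^ 2 *
    (-2 * (Y p.1 p.2 - γ p.1 p.2 (Y p.1)) /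
      ((c p.1 p.2 (Y p.1)) ^ 2 + (Y p.1 p.2 - γ p.1 p.2 (Y p.1)) ^ 2))

/-- The MO-RCGP posterior mean `μ(Y) = m + 𝕂 (𝕂 + 𝚺J(Y))⁻¹ (y(Y) − m_W(Y))`. -/
noncomputable def postMean (𝕂 : Matrix (Fin N × Fin T) (Fin N × Fin T) ℝ)
    (m : Fin N × Fin T → ℝ) (σ β : Fin T → ℝ)
    (γ c : Fin N → Fin T → (Fin T → ℝ) → ℝ) (Y : Fin N → Fin T → ℝ) :
    Fin N × Fin T → ℝ :=
  m + (𝕂 * (𝕂 + noiseMat σ * Jmat σ β γ c Y)⁻¹) *ᵥ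
    fun p => Y p.1 p.2 - shiftedMean m σ γ c Y p

/-- The MO-RCGP posterior covariance `S(Y) = 𝕂 (𝕂 + 𝚺J(Y))⁻¹ 𝚺J(Y)`. -/
noncomputable def postCov (𝕂 : Matrix (Fin N × Fin T) (Fin N × Fin T) ℝ)
    (σ β : Fin T → ℝ) (γ c : Fin N → Fin T → (Fin T → ℝ) → ℝ)
    (Y : Fin N → Fin T → ℝ) : Matrix (Fin N × Fin T) (Fin N × Fin T) ℝ :=
  𝕂 * (𝕂 + noiseMat σ * Jmat σ β γ c Y)⁻¹ * (noiseMat σ * Jmat σ β γ c Y)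

/-- The mean of the channel-`t` marginal posterior. -/
noncomputable def margMean (𝕂 : Matrix (Fin N × Fin T) (Fin N × Fin T) ℝ)
    (m : Fin N × Fin T → ℝ) (σ β : Fin T → ℝ)
    (γ c : Fin N → Fin T → (Fin T → ℝ) → ℝ) (Y : Fin N → Fin T → ℝ) (t : Fin T) :
    Fin N → ℝ := fun i => postMean 𝕂 m σ β γ c Y (i, t)

/-- The covariance of the channel-`t` marginal posterior: the channel-`t` diagonal
`N × N` sub-block of `S(Y)`. -/
noncomputable def margCov (𝕂 : Matrix (Fin N × Fin T) (Fin N × Fin T) ℝ)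
    (σ β : Fin T → ℝ) (γ c : Fin N → Fin T → (Fin T → ℝ) → ℝ)
    (Y : Fin N → Fin T → ℝ) (t : Fin T) : Matrix (Fin N) (Fin N) ℝ :=
  Matrix.of fun i i' => postCov 𝕂 σ β γ c Y (i, t) (i', t)

end MORCGP

lemma aux_form_nonneg {ι : Type*} [Fintype ι] {M : Matrix ι ι ℝ} (hM : M.PosSemidef)
    (x : ι → ℝ) : 0 ≤ x ⬝ᵥ (M *ᵥ x) := by
  simpa using hM.dotProduct_mulVec_nonneg x

lemma aux_symm {ι : Type*} [Fintype ι] {M : Matrix ι ι ℝ} (hM : M.IsHermitian)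
    (x y : ι → ℝ) : x ⬝ᵥ (M *ᵥ y) = y ⬝ᵥ (M *ᵥ x) := by
  have h : Mᵀ = M := by simpa [Matrix.IsHermitian, conjTranspose_eq_transpose_of_trivial] using hM
  rw [dotProduct_mulVec, ← mulVec_transpose, h, dotProduct_comm]

lemma aux_form_le {ι : Type*} [Fintype ι] (M : Matrix ι ι ℝ) (x : ι → ℝ) :
    x ⬝ᵥ (M *ᵥ x) ≤ (∑ p, ∑ q, |M p q|) * (x ⬝ᵥ x) := by
  have hx : ∀ p, x p * x p ≤ x ⬝ᵥ x := fun p =>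
    Finset.single_le_sum (f := fun p => x p * x p) (fun i _ => mul_self_nonneg _)
      (Finset.mem_univ p)
  generalize x ⬝ᵥ x = X at hx ⊢
  simp only [dotProduct, mulVec, Finset.sum_mul, Finset.mul_sum]
  refine Finset.sum_le_sum fun p _ => Finset.sum_le_sum fun q _ => ?_
  have h1 : x p * (M p q * x q) = M p q * (x p * x q) := by ring
  rw [h1]
  refine (le_abs_self _).trans ?_
  rw [abs_mul]
  refine mul_le_mul_of_nonneg_left ?_ (abs_nonneg _)
  have := hx p
  have := hx q
  rw [abs_le]
  constructor <;> nlinarith [sq_nonneg (x p + x q), sq_nonneg (x p - x q)]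

lemma aux_inv_anti {ι : Type*} [Fintype ι] (A B : Matrix ι ι ℝ) (hB : B.PosSemidef)
    (h : ∀ z, z ⬝ᵥ (B *ᵥ z) ≤ z ⬝ᵥ (A *ᵥ z)) (u w x : ι → ℝ) (hu : A *ᵥ u = x)
    (hw : B *ᵥ w = x) : x ⬝ᵥ u ≤ x ⬝ᵥ w := by
  have h0 := aux_form_nonneg hB (u - w)
  have h1 := h u
  have h2 := aux_symm hB.1 w u
  simp only [mulVec_sub, sub_dotProduct, dotProduct_sub] at h0
  rw [h2, hw] at h0
  rw [hu] at h1
  rw [dotProduct_comm x u, dotProduct_comm x w]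
  linarith

lemma aux_inv_le {ι : Type*} [Fintype ι] [DecidableEq ι] (A : Matrix ι ι ℝ) (hA : A.PosDef)
    (l : ℝ) (hl : 0 < l) (h : ∀ z, l * (z ⬝ᵥ z) ≤ z ⬝ᵥ (A *ᵥ z)) (v : ι → ℝ) :
    v ⬝ᵥ (A⁻¹ *ᵥ v) ≤ l⁻¹ * (v ⬝ᵥ v) := by
  have hu := (Matrix.isUnit_iff_isUnit_det A).1 hA.isUnit
  have := aux_inv_anti A (l • 1) (Matrix.PosSemidef.one.smul hl.le)
    (fun z => by simpa [smul_mulVec] using h z) (A⁻¹ *ᵥ v) (l⁻¹ • v) v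
    (by rw [mulVec_mulVec, Matrix.mul_nonsing_inv _ hu, one_mulVec])
    (by simp [smul_mulVec, smul_smul, hl.ne'])
  simpa using this

lemma aux_le_inv {ι : Type*} [Fintype ι] [DecidableEq ι] (A : Matrix ι ι ℝ) (hA : A.PosDef)
    (l : ℝ) (hl : 0 < l) (h : ∀ z, z ⬝ᵥ (A *ᵥ z) ≤ l * (z ⬝ᵥ z)) (v : ι → ℝ) :
    l⁻¹ * (v ⬝ᵥ v) ≤ v ⬝ᵥ (A⁻¹ *ᵥ v) := by
  have hu := (Matrix.isUnit_iff_isUnit_det A).1 hA.isUnit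
  have := aux_inv_anti (l • 1) A hA.posSemidef
    (fun z => by simpa [smul_mulVec] using h z) (l⁻¹ • v) (A⁻¹ *ᵥ v) v
    (by simp [smul_mulVec, smul_smul, hl.ne'])
    (by rw [mulVec_mulVec, Matrix.mul_nonsing_inv _ hu, one_mulVec])
  simpa using this

lemma aux_entry_le {ι : Type*} [Fintype ι] [DecidableEq ι] (A B : Matrix ι ι ℝ)
    (hA : A.PosDef) (h : ∀ z, z ⬝ᵥ (A *ᵥ z) ≤ z ⬝ᵥ (B *ᵥ z)) (p q : ι) :
    |A p q| ≤ ∑ i, |B i i| := by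
  have hd : ∀ i, A i i ≤ ∑ i, |B i i| := by
    intro i
    have h1 := h (Pi.single i 1)
    simp at h1
    exact (h1.trans (le_abs_self _)).trans
      (Finset.single_le_sum (f := fun i => |B i i|) (fun i _ => abs_nonneg _) (Finset.mem_univ i))
  have hs : A q p = A p q := by simpa using hA.1.apply p q
  have h1 := aux_form_nonneg hA.posSemidef (Pi.single p 1 + Pi.single q 1)
  have h2 := aux_form_nonneg hA.posSemidef (Pi.single p 1 - Pi.single q 1)
  simp [mulVec_add, mulVec_sub, add_dotProduct, sub_dotProduct] at h1 h2
  rw [abs_le]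
  constructor <;> linarith [hd p, hd q]

lemma aux_gauss_int {N : ℕ} (μ : Fin N → ℝ) (S : Matrix (Fin N) (Fin N) ℝ) (hS : S.PosDef)
    (f : (Fin N → ℝ) → ℝ) (hf : Continuous f) (A B : ℝ) (hB : 0 ≤ B)
    (hfb : ∀ x, |f x| ≤ A + B * ((x - μ) ⬝ᵥ (x - μ))) :
    Integrable f (multivariateGaussian μ S) := by
  unfold multivariateGaussian
  have hc : Continuous fun x : Fin N → ℝ =>
      ((Real.sqrt ((2 * Real.pi) ^ N * S.det))⁻¹ *
      Real.exp (-(1 / 2 : ℝ) * ((x - μ) ⬝ᵥ (S⁻¹ *ᵥ (x - μ))))) := by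
    simp only [dotProduct, mulVec]
    fun_prop
  rw [integrable_withDensity_iff (by exact (ENNReal.continuous_ofReal.comp hc).measurable)
    (Filter.Eventually.of_forall fun x => ENNReal.ofReal_lt_top)]
  set k := (Real.sqrt ((2 * Real.pi) ^ N * S.det))⁻¹ with hk
  have hk0 : 0 ≤ k := by positivity
  obtain ⟨a, ha, hform⟩ : ∃ a > 0, ∀ v, a * (v ⬝ᵥ v) ≤ v ⬝ᵥ (S⁻¹ *ᵥ v) := by
    have hnn : 0 ≤ ∑ p, ∑ q, |S p q| := by positivity
    refine ⟨((∑ p, ∑ q, |S p q|) + 1)⁻¹, by positivity, ?_⟩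
    refine aux_le_inv S hS _ (by positivity) fun z => ?_
    have := aux_form_le S z
    have : 0 ≤ z ⬝ᵥ z := Finset.sum_nonneg fun i _ => mul_self_nonneg _
    nlinarith
  have hI : Integrable (fun x : Fin N → ℝ => ∏ i, Real.exp (-(a/4) * (x i - μ i) ^ 2)) := by
    refine Integrable.fintype_prod (f := fun i y => Real.exp (-(a/4) * (y - μ i) ^ 2)) fun i => ?_
    exact (integrable_exp_neg_mul_sq (show 0 < a / 4 by positivity)).comp_sub_right (μ i)
  refine (hI.const_mul (k * (|A| + B * (4 / a)))).mono'
    (by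
      refine Continuous.aestronglyMeasurable ?_
      have : Continuous fun x : Fin N → ℝ => (ENNReal.ofReal ((k *
        Real.exp (-(1 / 2 : ℝ) * ((x - μ) ⬝ᵥ (S⁻¹ *ᵥ (x - μ))))))).toReal := by
        simp only [ENNReal.toReal_ofReal']
        exact hc.max continuous_const
      exact hf.mul this) (Filter.Eventually.of_forall fun x => ?_)
  rw [ENNReal.toReal_ofReal (by positivity), ← Real.exp_sum, ← Finset.mul_sum]
  set s := (x - μ) ⬝ᵥ (x - μ) with hs
  have hs' : ∑ i, (x i - μ i) ^ 2 = s := by simp [hs, dotProduct, sq]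
  have hs0 : 0 ≤ s := by rw [← hs']; positivity
  rw [hs', norm_mul, Real.norm_eq_abs, Real.norm_eq_abs, abs_of_nonneg (a := k * _) (by positivity)]
  have e1 : Real.exp (-(1 / 2 : ℝ) * ((x - μ) ⬝ᵥ (S⁻¹ *ᵥ (x - μ))))
      ≤ Real.exp (-(a/4) * s) * Real.exp (-(a/4) * s) := by
    rw [← Real.exp_add]
    apply Real.exp_le_exp.2
    have := hform (x - μ)
    linarith
  have e2 : s * Real.exp (-(a/4) * s) ≤ 4 / a := by
    have h1 : a / 4 * s ≤ Real.exp (a/4 * s) := by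
      have := Real.add_one_le_exp (a/4 * s); linarith
    rw [neg_mul, Real.exp_neg, ← div_eq_mul_inv, div_le_div_iff₀ (Real.exp_pos _) ha]
    linarith
  have e3 : Real.exp (-(a/4) * s) ≤ 1 := Real.exp_le_one_iff.2 (by
    have : 0 ≤ a / 4 * s := by positivity
    linarith)
  have e4 : |f x| ≤ |A| + B * s := (hfb x).trans (by linarith [le_abs_self A])
  set E := Real.exp (-(a/4) * s)
  have hE : 0 < E := Real.exp_pos _
  calc |f x| * (k * Real.exp (-(1 / 2 : ℝ) * ((x - μ) ⬝ᵥ (S⁻¹ *ᵥ (x - μ)))))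
      ≤ (|A| + B * s) * (k * (E * E)) := by gcongr
    _ = k * (|A| * E + B * (s * E)) * E := by ring
    _ ≤ k * (|A| * 1 + B * (4 / a)) * E := by gcongr
    _ = _ := by ring

lemma aux_kl {N : ℕ} (μ : Fin N → ℝ) (S : Matrix (Fin N) (Fin N) ℝ) (hS : S.PosDef)
    (l L R : ℝ) (hl : 0 < l) :
    ∃ C : ℝ, ∀ (μ' : Fin N → ℝ) (S' : Matrix (Fin N) (Fin N) ℝ), S'.PosDef →
      (∀ i j, |S' i j| ≤ L) → (∀ z, l * (z ⬝ᵥ z) ≤ z ⬝ᵥ (S' *ᵥ z)) → (∀ i, |μ' i| ≤ R) →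
      klDiv (multivariateGaussian μ S) (multivariateGaussian μ' S') ≤ ENNReal.ofReal C := by
  set a := (Real.sqrt ((2 * Real.pi) ^ N * S.det))⁻¹ with ha
  set M := ∑ i, (|μ i| + R) ^ 2 with hM
  have hM0 : 0 ≤ M := by positivity
  set A0 := |Real.log a| + Real.sqrt ((2 * Real.pi) ^ N * (N.factorial • L ^ N)) + l⁻¹ * M with hA0
  refine ⟨∫ x, (A0 + l⁻¹ * ((x - μ) ⬝ᵥ (x - μ))) ∂(multivariateGaussian μ S), ?_⟩
  intro μ' S' hS' hL hform hR
  set a' := (Real.sqrt ((2 * Real.pi) ^ N * S'.det))⁻¹ with ha'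
  have hapos : 0 < a := by have := hS.det_pos; positivity
  have hapos' : 0 < a' := by have := hS'.det_pos; positivity
  set p : (Fin N → ℝ) → ℝ := fun x => a *
      Real.exp (-(1 / 2 : ℝ) * ((x - μ) ⬝ᵥ (S⁻¹ *ᵥ (x - μ)))) with hp
  set q : (Fin N → ℝ) → ℝ := fun x => a' *
      Real.exp (-(1 / 2 : ℝ) * ((x - μ') ⬝ᵥ (S'⁻¹ *ᵥ (x - μ')))) with hq
  have hp0 : ∀ x, 0 < p x := fun x => by positivity
  have hq0 : ∀ x, 0 < q x := fun x => by positivity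
  have hpc : Continuous p := by
    simp only [hp, dotProduct, mulVec]; fun_prop
  have hqc : Continuous q := by
    simp only [hq, dotProduct, mulVec]; fun_prop
  have hP : multivariateGaussian μ S = volume.withDensity fun x => ENNReal.ofReal (p x) := rfl
  have hQ : multivariateGaussian μ' S' = volume.withDensity fun x => ENNReal.ofReal (q x) := rfl
  have hPQ : multivariateGaussian μ S = (multivariateGaussian μ' S').withDensity
      fun x => ENNReal.ofReal (p x / q x) := by
    rw [hP, hQ, ← withDensity_mul _ (by fun_prop) (by
      exact (ENNReal.measurable_ofReal.comp (hpc.measurable.div hqc.measurable)))]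
    congr 1
    ext x
    rw [Pi.mul_apply, ← ENNReal.ofReal_mul (hq0 x).le, mul_div_cancel₀ _ (hq0 x).ne']
  have hac : multivariateGaussian μ S ≪ multivariateGaussian μ' S' := by
    rw [hPQ]; exact withDensity_absolutelyContinuous _ _
  have hsf : SigmaFinite (multivariateGaussian μ' S') := by
    rw [hQ]; exact SigmaFinite.withDensity_ofReal _
  have hrn : (multivariateGaussian μ S).rnDeriv (multivariateGaussian μ' S')
      =ᵐ[multivariateGaussian μ S] fun x => ENNReal.ofReal (p x / q x) := by
    apply hac.ae_le
    have h := Measure.rnDeriv_withDensity (multivariateGaussian μ' S')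
      (f := fun x => ENNReal.ofReal (p x / q x))
      (ENNReal.measurable_ofReal.comp (hpc.measurable.div hqc.measurable))
    rwa [← hPQ] at h
  set g : (Fin N → ℝ) → ℝ := fun x => Real.log a - Real.log a'
      - (1 / 2 : ℝ) * ((x - μ) ⬝ᵥ (S⁻¹ *ᵥ (x - μ)))
      + (1 / 2 : ℝ) * ((x - μ') ⬝ᵥ (S'⁻¹ *ᵥ (x - μ'))) with hg
  have hgc : Continuous g := by
    simp only [hg, dotProduct, mulVec]; fun_prop
  have hllr : llr (multivariateGaussian μ S) (multivariateGaussian μ' S')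
      =ᵐ[multivariateGaussian μ S] g := by
    filter_upwards [hrn] with x hx
    rw [llr, hx, ENNReal.toReal_ofReal (div_pos (hp0 x) (hq0 x)).le,
      Real.log_div (hp0 x).ne' (hq0 x).ne']
    simp only [hp, hq, hg]
    rw [Real.log_mul hapos.ne' (Real.exp_pos _).ne', Real.log_mul hapos'.ne' (Real.exp_pos _).ne',
      Real.log_exp, Real.log_exp]
    ring
  have hq1 : ∀ x : Fin N → ℝ, 0 ≤ (x - μ) ⬝ᵥ (S⁻¹ *ᵥ (x - μ)) := fun x =>
    aux_form_nonneg hS.inv.posSemidef _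
  have hq1' := fun x : Fin N → ℝ => aux_form_le S⁻¹ (x - μ)
  have hq2 : ∀ x : Fin N → ℝ, 0 ≤ (x - μ') ⬝ᵥ (S'⁻¹ *ᵥ (x - μ')) := fun x =>
    aux_form_nonneg hS'.inv.posSemidef _
  have hq2' : ∀ x : Fin N → ℝ, (1 / 2 : ℝ) * ((x - μ') ⬝ᵥ (S'⁻¹ *ᵥ (x - μ')))
      ≤ l⁻¹ * M + l⁻¹ * ((x - μ) ⬝ᵥ (x - μ)) := by
    intro x
    have h1 := aux_inv_le S' hS' l hl hform (x - μ')
    have h2 : (x - μ') ⬝ᵥ (x - μ') ≤ 2 * (M + (x - μ) ⬝ᵥ (x - μ)) := by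
      simp only [dotProduct, hM, ← Finset.sum_add_distrib, Finset.mul_sum, Pi.sub_apply]
      refine Finset.sum_le_sum fun i _ => ?_
      have h3 : |μ i - μ' i| ≤ |μ i| + R := (abs_sub _ _).trans (by linarith [hR i])
      have h4 : (μ i - μ' i) ^ 2 ≤ (|μ i| + R) ^ 2 := sq_le_sq' (by linarith [(abs_le.1 h3).1])
        (abs_le.1 h3).2
      nlinarith [sq_nonneg ((x i - μ i) - (μ i - μ' i))]
    have h5 : 0 < l⁻¹ := by positivity
    have h6 := mul_le_mul_of_nonneg_left h2 h5.le
    linarith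
  have hI : Integrable g (multivariateGaussian μ S) := by
    refine aux_gauss_int μ S hS g hgc (|Real.log a| + |Real.log a'| + l⁻¹ * M)
      (l⁻¹ + ∑ p, ∑ q, |S⁻¹ p q|) (by positivity) fun x => ?_
    have h0 : 0 ≤ l⁻¹ * M := by positivity
    have h1 : 0 ≤ (x - μ) ⬝ᵥ (x - μ) := Finset.sum_nonneg fun i _ => mul_self_nonneg _
    have h2 : 0 ≤ l⁻¹ * ((x - μ) ⬝ᵥ (x - μ)) := by positivity
    have := hq1 x
    have := hq1' x
    have := hq2 x
    have := hq2' x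
    have := abs_le.1 (le_refl |Real.log a|)
    have := abs_le.1 (le_refl |Real.log a'|)
    simp only [hg]
    rw [abs_le]
    constructor <;> linarith
  have hI2 : Integrable (fun x => A0 + l⁻¹ * ((x - μ) ⬝ᵥ (x - μ))) (multivariateGaussian μ S) := by
    refine aux_gauss_int μ S hS _ (by simp only [dotProduct]; fun_prop) |A0| l⁻¹ (by positivity)
      fun x => ?_
    have h1 : 0 ≤ (x - μ) ⬝ᵥ (x - μ) := Finset.sum_nonneg fun i _ => mul_self_nonneg _
    refine (abs_add_le _ _).trans ?_
    rw [abs_of_nonneg (a := l⁻¹ * _) (by positivity)]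
  rw [klDiv, if_pos ⟨hac, (integrable_congr hllr).2 hI⟩, integral_congr_ae hllr]
  refine ENNReal.ofReal_le_ofReal (integral_mono hI hI2 fun x => ?_)
  have hdet : S'.det ≤ N.factorial • L ^ N := by
    have := Matrix.det_le (A := S') (abv := AbsoluteValue.abs) (x := L) (fun i j => hL i j)
    simp only [Fintype.card_fin] at this
    exact (le_abs_self _).trans this
  have hlog : - Real.log a' ≤ Real.sqrt ((2 * Real.pi) ^ N * (N.factorial • L ^ N)) := by
    rw [ha', Real.log_inv, neg_neg]
    refine (Real.log_le_self (Real.sqrt_nonneg _)).trans (Real.sqrt_le_sqrt ?_)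
    gcongr
  have := hq1 x
  have := hq2' x
  have := le_abs_self (Real.log a)
  simp only [hg, hA0]
  linarith

lemma aux_cov_eq {ι : Type*} [Fintype ι] [DecidableEq ι] (K : Matrix ι ι ℝ) (hK : K.PosDef)
    (d : ι → ℝ) (hd : ∀ i, 0 < d i) :
    K * (K + diagonal d)⁻¹ * diagonal d = (K⁻¹ + diagonal fun i => (d i)⁻¹)⁻¹ := by
  symm
  apply Matrix.inv_eq_right_inv
  have hD : (diagonal d).PosDef := Matrix.PosDef.diagonal hd
  have hu := (Matrix.isUnit_iff_isUnit_det _).1 (hK.add hD).isUnit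
  have huK := (Matrix.isUnit_iff_isUnit_det _).1 hK.isUnit
  have hE : (diagonal fun i => (d i)⁻¹) * diagonal d = 1 := by
    rw [diagonal_mul_diagonal, ← diagonal_one]
    congr 1
    ext i
    exact inv_mul_cancel₀ (hd i).ne'
  have h1 : (K⁻¹ + diagonal fun i => (d i)⁻¹) * K
      = (diagonal fun i => (d i)⁻¹) * (K + diagonal d) := by
    rw [add_mul, mul_add, Matrix.nonsing_inv_mul _ huK, hE, add_comm]
  rw [← mul_assoc, ← mul_assoc, h1, mul_assoc _ (K + diagonal d), Matrix.mul_nonsing_inv _ hu,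
    mul_one, hE]

lemma aux_dot_nonneg {ι : Type*} [Fintype ι] (z : ι → ℝ) : 0 ≤ z ⬝ᵥ z :=
  Finset.sum_nonneg fun i _ => mul_self_nonneg _

/-- Uniform bounds for `(K⁻¹ + E)⁻¹` when `0 < e ≤ κ`. -/
lemma aux_cov_bounds {ι : Type*} [Fintype ι] [DecidableEq ι] (K : Matrix ι ι ℝ) (hK : K.PosDef)
    (κ : ι → ℝ) (hκ : ∀ i, 0 ≤ κ i) :
    ∃ l > 0, ∀ e : ι → ℝ, (∀ i, 0 < e i) → (∀ i, e i ≤ κ i) →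
      ((K⁻¹ + diagonal e)⁻¹).PosDef ∧
      (∀ p q, |(K⁻¹ + diagonal e)⁻¹ p q| ≤ ∑ i, |K i i|) ∧
      (∀ z, l * (z ⬝ᵥ z) ≤ z ⬝ᵥ ((K⁻¹ + diagonal e)⁻¹ *ᵥ z)) := by
  have hk : 0 < (∑ p, ∑ q, |K⁻¹ p q|) + (∑ i, κ i) + 1 := by
    have : 0 ≤ ∑ i, κ i := Finset.sum_nonneg fun i _ => hκ i
    positivity
  refine ⟨((∑ p, ∑ q, |K⁻¹ p q|) + (∑ i, κ i) + 1)⁻¹, by positivity, fun e he hle => ?_⟩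
  have hA : (K⁻¹ + diagonal e).PosDef := hK.inv.add (Matrix.PosDef.diagonal he)
  have hef : ∀ z, z ⬝ᵥ (diagonal e *ᵥ z) = ∑ i, e i * (z i * z i) := by
    intro z
    simp only [dotProduct, mulVec_diagonal]
    exact Finset.sum_congr rfl fun i _ => by ring
  refine ⟨hA.inv, ?_, ?_⟩
  · refine aux_entry_le _ K hA.inv fun z => ?_
    have hu := (Matrix.isUnit_iff_isUnit_det _).1 hA.isUnit
    have huK := (Matrix.isUnit_iff_isUnit_det _).1 hK.isUnit
    refine aux_inv_anti (K⁻¹ + diagonal e) K⁻¹ hK.inv.posSemidef (fun z => ?_) _ _ z ?_ ?_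
    · rw [add_mulVec, dotProduct_add, hef]
      have : 0 ≤ ∑ i, e i * (z i * z i) :=
        Finset.sum_nonneg fun i _ => mul_nonneg (he i).le (mul_self_nonneg _)
      linarith
    · rw [mulVec_mulVec, Matrix.mul_nonsing_inv _ hu, one_mulVec]
    · rw [mulVec_mulVec, Matrix.nonsing_inv_mul _ huK, one_mulVec]
  · refine aux_le_inv _ hA _ hk fun z => ?_
    rw [add_mulVec, dotProduct_add, hef]
    have h1 := aux_form_le K⁻¹ z
    have h2 : ∑ i, e i * (z i * z i) ≤ (∑ i, κ i) * (z ⬝ᵥ z) := by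
      rw [Finset.sum_mul]
      refine Finset.sum_le_sum fun i _ => ?_
      have hx : z i * z i ≤ z ⬝ᵥ z :=
        Finset.single_le_sum (f := fun p => z p * z p) (fun i _ => mul_self_nonneg _)
          (Finset.mem_univ i)
      exact mul_le_mul (hle i) hx (mul_self_nonneg _) (hκ i)
    have := aux_dot_nonneg z
    linarith

/-- The diagonal entries of `𝚺J(Y)`. -/
noncomputable def auxD {N T : ℕ} (σ β : Fin T → ℝ) (γ c : Fin N → Fin T → (Fin T → ℝ) → ℝ)
    (Y : Fin N → Fin T → ℝ) (p : Fin N × Fin T) : ℝ :=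
  (σ p.2) ^ 2 * ((σ p.2) ^ 2 / (2 * (imqWeight β γ c Y p.1 p.2) ^ 2))

lemma aux_SJ {N T : ℕ} (σ β : Fin T → ℝ) (γ c : Fin N → Fin T → (Fin T → ℝ) → ℝ)
    (Y : Fin N → Fin T → ℝ) :
    noiseMat σ * Jmat σ β γ c Y = diagonal (auxD σ β γ c Y) := by
  rw [noiseMat, Jmat, diagonal_mul_diagonal]
  rfl

lemma aux_d_inv {N T : ℕ} (σ β : Fin T → ℝ) (γ c : Fin N → Fin T → (Fin T → ℝ) → ℝ)
    (Y : Fin N → Fin T → ℝ) (p : Fin N × Fin T) :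
    (auxD σ β γ c Y p)⁻¹ = 2 * (β p.2) ^ 2 / (σ p.2) ^ 4 *
      (1 + ((Y p.1 p.2 - γ p.1 p.2 (Y p.1)) / c p.1 p.2 (Y p.1)) ^ 2)⁻¹ := by
  rw [auxD, imqWeight, mul_pow, inv_pow, Real.sq_sqrt (by positivity), ← mul_div_assoc, inv_div]
  have : (σ p.2) ^ 4 = (σ p.2) ^ 2 * (σ p.2) ^ 2 := by ring
  rw [this]
  ring

lemma aux_d_pos {N T : ℕ} (σ β : Fin T → ℝ) (hσ : ∀ t, 0 < σ t) (hβ : ∀ t, 0 < β t)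
    (γ c : Fin N → Fin T → (Fin T → ℝ) → ℝ)
    (Y : Fin N → Fin T → ℝ) (p : Fin N × Fin T) : 0 < auxD σ β γ c Y p := by
  rw [← inv_pos, aux_d_inv]
  have := hσ p.2
  have := hβ p.2
  positivity

lemma aux_all
    (N T : ℕ)
    (𝕂 : Matrix (Fin N × Fin T) (Fin N × Fin T) ℝ) (h𝕂 : 𝕂.PosDef)
    (m : Fin N × Fin T → ℝ)
    (σ : Fin T → ℝ) (hσ : ∀ t, 0 < σ t)
    (β : Fin T → ℝ) (hβ : ∀ t, 0 < β t)
    (γ c : Fin N → Fin T → (Fin T → ℝ) → ℝ)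
    (Γ : ℝ) (hΓ : ∀ i t v, |γ i t v| ≤ Γ)
    (cmin cmax : ℝ) (hcmin : 0 < cmin)
    (hc : ∀ i t v, cmin ≤ |c i t v| ∧ |c i t v| ≤ cmax) :
    ∃ l L R : ℝ, 0 < l ∧ ∀ Y : Fin N → Fin T → ℝ, (postCov 𝕂 σ β γ c Y).PosDef ∧
      (∀ p q, |postCov 𝕂 σ β γ c Y p q| ≤ L) ∧
      (∀ z, l * (z ⬝ᵥ z) ≤ z ⬝ᵥ (postCov 𝕂 σ β γ c Y *ᵥ z)) ∧
      (∀ p, |postMean 𝕂 m σ β γ c Y p| ≤ R) := by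
  set κ : Fin N × Fin T → ℝ := fun p => 2 * (β p.2) ^ 2 / (σ p.2) ^ 4 with hκ
  have hκ0 : ∀ p, 0 ≤ κ p := fun p => by positivity
  obtain ⟨l, hl, hb⟩ := aux_cov_bounds 𝕂 h𝕂 κ hκ0
  set L := ∑ i, |𝕂 i i| with hL
  have hL0 : 0 ≤ L := by positivity
  set G : Fin N × Fin T → ℝ := fun q => κ q * (cmax + Γ + |m q| + (σ q.2) ^ 2 / cmin) with hG
  refine ⟨l, L, ∑ p, |m p| + ∑ q, L * G q, hl, fun Y => ?_⟩
  have hdp := aux_d_pos σ β hσ hβ γ c Y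
  have hSeq : postCov 𝕂 σ β γ c Y = (𝕂⁻¹ + diagonal fun i => (auxD σ β γ c Y i)⁻¹)⁻¹ := by
    rw [postCov, aux_SJ, aux_cov_eq 𝕂 h𝕂 _ hdp]
  obtain ⟨h1, h2, h3⟩ := hb (fun i => (auxD σ β γ c Y i)⁻¹) (fun i => inv_pos.2 (hdp i))
    (fun i => by
      rw [aux_d_inv]
      refine mul_le_of_le_one_right (hκ0 i) (inv_le_one_of_one_le₀ ?_)
      nlinarith [sq_nonneg ((Y i.1 i.2 - γ i.1 i.2 (Y i.1)) / c i.1 i.2 (Y i.1))])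
  rw [← hSeq] at h1 h2 h3
  refine ⟨h1, h2, h3, fun p => ?_⟩
  set r : Fin N × Fin T → ℝ := fun p => Y p.1 p.2 - shiftedMean m σ γ c Y p with hr
  have hrb : ∀ q, |(auxD σ β γ c Y q)⁻¹ * r q| ≤ G q := by
    intro q
    have hcq := hc q.1 q.2 (Y q.1)
    have hΓq := hΓ q.1 q.2 (Y q.1)
    have hrq : r q = (Y q.1 q.2 - γ q.1 q.2 (Y q.1)) + γ q.1 q.2 (Y q.1) - m q -
      (σ q.2) ^ 2 * (-2 * (Y q.1 q.2 - γ q.1 q.2 (Y q.1)) /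
      ((c q.1 q.2 (Y q.1)) ^ 2 + (Y q.1 q.2 - γ q.1 q.2 (Y q.1)) ^ 2)) := by
      simp only [hr, shiftedMean]; ring
    rw [aux_d_inv, hrq]
    generalize c q.1 q.2 (Y q.1) = C at *
    generalize γ q.1 q.2 (Y q.1) = g at *
    generalize Y q.1 q.2 - g = u at *
    have hC : 0 < |C| := hcmin.trans_le hcq.1
    have hC0 : C ≠ 0 := abs_pos.1 hC
    have hcm : 0 < cmax := hC.trans_le hcq.2
    set z := u / C with hz
    have huz : |u| = |z| * |C| := by rw [← abs_mul, hz, div_mul_cancel₀ _ hC0]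
    have hz1 : 0 < 1 + z ^ 2 := by positivity
    have hinv1 : (1 + z ^ 2)⁻¹ ≤ 1 := inv_le_one_of_one_le₀ (by nlinarith [sq_nonneg z])
    have hz2 : |z| * (1 + z ^ 2)⁻¹ ≤ 1 := by
      rw [← div_eq_mul_inv, div_le_one hz1]
      nlinarith [sq_abs z, sq_nonneg (|z| - 1), abs_nonneg z]
    have hsh : |(σ q.2) ^ 2 * (-2 * u / (C ^ 2 + u ^ 2))| ≤ (σ q.2) ^ 2 / cmin := by
      have hpos : 0 < C ^ 2 + u ^ 2 := by positivity
      rw [abs_mul, abs_of_nonneg (sq_nonneg _), abs_div, abs_mul, abs_of_pos hpos,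
        div_eq_mul_inv _ cmin]
      refine mul_le_mul_of_nonneg_left ?_ (sq_nonneg _)
      rw [← one_div, div_le_div_iff₀ hpos hcmin]
      have : |(-2 : ℝ)| = 2 := by norm_num
      rw [this]
      nlinarith [sq_abs C, sq_abs u, sq_nonneg (|C| - |u|), abs_nonneg u,
        mul_le_mul_of_nonneg_left hcq.1 (abs_nonneg u)]
    have hm0 := abs_nonneg (m q)
    have hΓ0 := (abs_nonneg g).trans hΓq
    rw [mul_assoc, abs_mul, abs_of_nonneg (hκ0 q), abs_mul, abs_of_pos (inv_pos.2 hz1)]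
    refine mul_le_mul_of_nonneg_left ?_ (hκ0 q)
    set sh := (σ q.2) ^ 2 * (-2 * u / (C ^ 2 + u ^ 2))
    have habs : |u + g - m q - sh| ≤ |u| + (Γ + |m q| + (σ q.2) ^ 2 / cmin) := by
      have a1 := abs_sub (u + g - m q) sh
      have a2 := abs_sub (u + g) (m q)
      have a3 := abs_add_le u g
      linarith
    have hrest : 0 ≤ Γ + |m q| + (σ q.2) ^ 2 / cmin := by positivity
    have hip := inv_pos.2 hz1
    calc (1 + z ^ 2)⁻¹ * |u + g - m q - sh|
        ≤ (1 + z ^ 2)⁻¹ * (|u| + (Γ + |m q| + (σ q.2) ^ 2 / cmin)) := by gcongr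
      _ = (|z| * (1 + z ^ 2)⁻¹) * |C| + (1 + z ^ 2)⁻¹ * (Γ + |m q| + (σ q.2) ^ 2 / cmin) := by
        rw [huz]; ring
      _ ≤ 1 * cmax + 1 * (Γ + |m q| + (σ q.2) ^ 2 / cmin) := by
        have := hcq.2
        gcongr
      _ = _ := by ring
  have hmean : postMean 𝕂 m σ β γ c Y p = m p + ∑ q, postCov 𝕂 σ β γ c Y p q *
      ((auxD σ β γ c Y q)⁻¹ * r q) := by
    have hv : r = diagonal (auxD σ β γ c Y) *ᵥ (fun q => (auxD σ β γ c Y q)⁻¹ * r q) := by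
      ext q
      rw [mulVec_diagonal, mul_inv_cancel_left₀ (hdp q).ne']
    rw [postMean, postCov, aux_SJ, Pi.add_apply]
    change m p + ((𝕂 * (𝕂 + diagonal (auxD σ β γ c Y))⁻¹) *ᵥ r) p = _
    conv_lhs => rw [hv, mulVec_mulVec]
    rfl
  rw [hmean]
  refine (abs_add_le _ _).trans (add_le_add ?_ ?_)
  · exact Finset.single_le_sum (f := fun p => |m p|) (fun i _ => abs_nonneg _) (Finset.mem_univ p)
  · refine (Finset.abs_sum_le_sum_abs _ _).trans (Finset.sum_le_sum fun q _ => ?_)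
    rw [abs_mul]
    exact mul_le_mul (h2 p q) (hrb q) (abs_nonneg _) hL0

/-- Robustness of the MO-RCGP: the posterior covariance and all its channel
marginal covariances are symmetric positive definite, and the posterior influence
function of an arbitrarily large contamination `yᶜ` of the single entry `(m₀, s)`
of the observation matrix is uniformly bounded across all channels `t` by a
constant `C` independent of `yᶜ`. -/
theorem mo_rcgp_robustness
    (N T : ℕ) (hN : 0 < N) (hT : 0 < T)
    (𝕂 : Matrix (Fin N × Fin T) (Fin N × Fin T) ℝ) (h𝕂 : 𝕂.PosDef)
    (m : Fin N × Fin T → ℝ)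
    (σ : Fin T → ℝ) (hσ : ∀ t, 0 < σ t)
    (β : Fin T → ℝ) (hβ : ∀ t, 0 < β t)
    (γ c : Fin N → Fin T → (Fin T → ℝ) → ℝ)
    (hγind : ∀ i t v x, γ i t (Function.update v t x) = γ i t v)
    (hcind : ∀ i t v x, c i t (Function.update v t x) = c i t v)
    (Γ : ℝ) (hΓ : ∀ i t v, |γ i t v| ≤ Γ)
    (cmin cmax : ℝ) (hcmin : 0 < cmin)
    (hc : ∀ i t v, cmin ≤ |c i t v| ∧ |c i t v| ≤ cmax)
    (Y : Fin N → Fin T → ℝ) (m₀ : Fin N) (s : Fin T) :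
    (∀ Y' : Fin N → Fin T → ℝ, (postCov 𝕂 σ β γ c Y').PosDef) ∧
    (∀ (Y' : Fin N → Fin T → ℝ) (t : Fin T), (margCov 𝕂 σ β γ c Y' t).PosDef) ∧
    ∃ C : ℝ, ∀ (t : Fin T) (yc : ℝ),
      klDiv
          (multivariateGaussian (margMean 𝕂 m σ β γ c Y t) (margCov 𝕂 σ β γ c Y t))
          (multivariateGaussian
            (margMean 𝕂 m σ β γ c (Function.update Y m₀ (Function.update (Y m₀) s yc)) t)
            (margCov 𝕂 σ β γ c (Function.update Y m₀ (Function.update (Y m₀) s yc)) t))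
        ≤ ENNReal.ofReal C := by
  obtain ⟨l, L, R, hl, h⟩ := aux_all N T 𝕂 h𝕂 m σ hσ β hβ γ c Γ hΓ cmin cmax hcmin hc
  have hmarg : ∀ (Y' : Fin N → Fin T → ℝ) (t : Fin T), (margCov 𝕂 σ β γ c Y' t).PosDef := by
    intro Y' t
    exact (h Y').1.submatrix (e := fun i : Fin N => (i, t)) (fun i j hij => by simpa using hij)
  refine ⟨fun Y' => (h Y').1, hmarg, ?_⟩
  have hform : ∀ (Y' : Fin N → Fin T → ℝ) (t : Fin T) (z : Fin N → ℝ),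
      l * (z ⬝ᵥ z) ≤ z ⬝ᵥ (margCov 𝕂 σ β γ c Y' t *ᵥ z) := by
    intro Y' t z
    have h1 := (h Y').2.2.1 (fun p => if p.2 = t then z p.1 else 0)
    simpa [dotProduct, mulVec, Fintype.sum_prod_type, margCov] using h1
  choose C hC using fun t : Fin T =>
    aux_kl (margMean 𝕂 m σ β γ c Y t) (margCov 𝕂 σ β γ c Y t) (hmarg Y t) l L R hl
  refine ⟨∑ t, |C t|, fun t yc => ?_⟩
  refine (hC t _ _ (hmarg _ t) (fun i j => (h _).2.1 _ _) (hform _ t)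
    (fun i => (h _).2.2.2 _)).trans (ENNReal.ofReal_le_ofReal ?_)
  exact (le_abs_self _).trans (Finset.single_le_sum (f := fun t => |C t|)
    (fun i _ => abs_nonneg _) (Finset.mem_univ t))
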